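/- Let (X,d) be a compact θ-metric space. Then for every p∈[1,∞), the Wasserstein space (P(X),W_p) is a compact θ-metric space with diam(P(X),W_p) = diam(X,d), and the map x ↦ δ_x is an isometric embedding of (X,d) into (P(X),W_p). -/

import Mathlib

open Set Filter Topology

variable {X : Type*}

/-- Forward ball of an (possibly asymmetric) distance function. -/
def fwdBall (d : X → X → ℝ) (x : X) (r : ℝ) : Set X := {y | d x y < r}

/-- Backward ball. -/
def bwdBall (d : X → X → ℝ) (x : X) (r : ℝ) : Set X := {y | d y x < r}

/-- The forward topology, generated by forward balls. -/
def fwdTop (d : X → X → ℝ) : TopologicalSpace X :=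
  TopologicalSpace.generateFrom {s | ∃ x r, s = fwdBall d x r}

/-- The backward topology, generated by backward balls. -/
def bwdTop (d : X → X → ℝ) : TopologicalSpace X :=
  TopologicalSpace.generateFrom {s | ∃ x r, s = bwdBall d x r}

/-- `d` is an irreversible metric: nonnegative, vanishing exactly on the diagonal, and
satisfying the triangle inequality (symmetry is not required). -/
def IsIrrevMetric (d : X → X → ℝ) : Prop :=
  (∀ x y, 0 ≤ d x y) ∧ (∀ x y, d x y = 0 ↔ x = y) ∧ ∀ x y z, d x z ≤ d x y + d y z

/-- `(X, star, d)` is a pointed forward `Θ`-metric space: `Θ` is nondecreasing with values ≥ 1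
and the reversibility of the closure (in the forward topology) of each forward ball of radius
`r > 0` about `star` is bounded by `Θ r`. -/
def PointedForwardTheta (d : X → X → ℝ) (star : X) (Θ : ℝ → ℝ) : Prop :=
  Monotone Θ ∧ (∀ r, 1 ≤ Θ r) ∧
  ∀ r > 0, ∀ x ∈ @closure X (fwdTop d) (fwdBall d star r),
    ∀ y ∈ @closure X (fwdTop d) (fwdBall d star r), d x y ≤ Θ r * d y x
open MeasureTheory
open scoped ENNReal

/-- The total transport cost of a plan `π` for the cost `d(x,y)^p` (the directed distance). -/
noncomputable def transportCost [MeasurableSpace X] (d : X → X → ℝ) (p : ℝ)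
    (π : Measure (X × X)) : ℝ≥0∞ :=
  ∫⁻ z, ENNReal.ofReal (d z.1 z.2) ^ p ∂π

/-- `π` is a coupling (transference plan) from `μ` to `ν`. -/
def IsCoupling [MeasurableSpace X] (π : Measure (X × X)) (μ ν : Measure X) : Prop :=
  π.map Prod.fst = μ ∧ π.map Prod.snd = ν

/-- The (possibly asymmetric) `p`-Wasserstein distance from `μ` to `ν`. -/
noncomputable def wassDist [MeasurableSpace X] (d : X → X → ℝ) (p : ℝ)
    (μ ν : Measure X) : ℝ≥0∞ :=
  (⨅ π : {π : Measure (X × X) // IsCoupling π μ ν}, transportCost d p π.1) ^ (1 / p)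

/-!
Since `d ≤ max (d x y) (d y x) ≤ θ * d`, the symmetrization `D` of `d` is a metric inducing the
forward topology, and the Wasserstein distances of `d` and `D` differ by a factor of at most `θ`.

The triangle inequality follows from gluing two couplings along their common marginal and
Minkowski's inequality. By Markov's inequality the Lévy–Prokhorov distance satisfies
`LP ^ (p + 1) ≤ W_p ^ p` for the metric `D`, so `W_p` separates measures. For compactness, weak
limits of subsequences exist, and weak convergence implies `W_p`-convergence: moving masses to
the centres of a fine partition of unity costs little, and the discretized measures are supported
on a common finite set with converging weights, so they share all but a small part of their mass.
-/

open ProbabilityTheory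
open scoped NNReal BoundedContinuousFunction

section Coupling

variable [MeasurableSpace X] {d : X → X → ℝ} {p : ℝ} {π π₁ π₂ : Measure (X × X)}
  {μ ν μ₁ μ₂ ν₁ ν₂ : Measure X}

lemma IsCoupling.measure_univ_left (h : IsCoupling π μ ν) : π univ = μ univ := by
  rw [← h.1, Measure.map_apply measurable_fst .univ, preimage_univ]

lemma IsCoupling.measure_univ_right (h : IsCoupling π μ ν) : π univ = ν univ := by
  rw [← h.2, Measure.map_apply measurable_snd .univ, preimage_univ]

lemma IsCoupling.add (h₁ : IsCoupling π₁ μ₁ ν₁) (h₂ : IsCoupling π₂ μ₂ ν₂) :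
    IsCoupling (π₁ + π₂) (μ₁ + μ₂) (ν₁ + ν₂) :=
  ⟨by rw [Measure.map_add _ _ measurable_fst, h₁.1, h₂.1],
    by rw [Measure.map_add _ _ measurable_snd, h₁.2, h₂.2]⟩

lemma IsCoupling.map_swap (h : IsCoupling π μ ν) : IsCoupling (π.map Prod.swap) ν μ :=
  ⟨by rw [Measure.map_map measurable_fst measurable_swap]; exact h.2,
    by rw [Measure.map_map measurable_snd measurable_swap]; exact h.1⟩

lemma isCoupling_map_diag (μ : Measure X) : IsCoupling (μ.map fun x ↦ (x, x)) μ μ :=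
  ⟨by rw [Measure.map_map measurable_fst (by fun_prop)]; exact Measure.map_id,
    by rw [Measure.map_map measurable_snd (by fun_prop)]; exact Measure.map_id⟩

lemma isCoupling_inv_smul_prod [IsFiniteMeasure μ] [IsFiniteMeasure ν] (h : μ univ = ν univ) :
    IsCoupling ((μ univ)⁻¹ • μ.prod ν) μ ν := by
  rcases eq_or_ne (μ univ) 0 with h0 | h0
  · have hμ : μ = 0 := Measure.measure_univ_eq_zero.1 h0
    have hν : ν = 0 := Measure.measure_univ_eq_zero.1 (h ▸ h0)
    simp [IsCoupling, hμ, hν]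
  · have hinv : (μ univ)⁻¹ * μ univ = 1 := ENNReal.inv_mul_cancel h0 (measure_ne_top _ _)
    exact ⟨by rw [Measure.map_smul, Measure.map_fst_prod, ← h, smul_smul, hinv, one_smul],
      by rw [Measure.map_smul, Measure.map_snd_prod, smul_smul, hinv, one_smul]⟩

lemma transportCost_map_swap (d : X → X → ℝ) (p : ℝ) (π : Measure (X × X)) :
    transportCost (fun x y ↦ d y x) p (π.map Prod.swap) = transportCost d p π :=
  lintegral_map_equiv (fun z : X × X ↦ ENNReal.ofReal (d z.2 z.1) ^ p) MeasurableEquiv.prodComm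

lemma transportCost_le_of_forall_le (hp : 0 ≤ p) {D : ℝ≥0∞}
    (hD : ∀ x y, ENNReal.ofReal (d x y) ≤ D) : transportCost d p π ≤ D ^ p * π univ := by
  rw [← lintegral_const]
  exact lintegral_mono fun z ↦ ENNReal.rpow_le_rpow (hD z.1 z.2) hp

lemma transportCost_map_diag (hp : 0 < p) (hd : ∀ x, d x x = 0) :
    transportCost d p (μ.map fun x ↦ (x, x)) = 0 :=
  le_antisymm ((lintegral_map_le _ _).trans (by simp [hd, hp])) zero_le

lemma transportCost_le_mul {d' : X → X → ℝ} (hp : 0 ≤ p) {C : ℝ} (hC : 0 ≤ C)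
    (h : ∀ x y, d x y ≤ C * d' x y) :
    transportCost d p π ≤ ENNReal.ofReal C ^ p * transportCost d' p π := by
  rw [transportCost, transportCost, ← lintegral_const_mul' _ _ (by finiteness)]
  gcongr with z
  rw [← ENNReal.mul_rpow_of_nonneg _ _ hp, ← ENNReal.ofReal_mul hC]
  gcongr
  exact h _ _

lemma IsCoupling.transportCost_dirac [MeasurableSingletonClass X] {x y : X}
    (h : IsCoupling π (Measure.dirac x) (Measure.dirac y)) :
    transportCost d p π = ENNReal.ofReal (d x y) ^ p := by
  have hfst : ∀ᵐ z ∂π, z.1 = x :=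
    ae_of_ae_map (p := (· = x)) measurable_fst.aemeasurable (by simp [h.1])
  have hsnd : ∀ᵐ z ∂π, z.2 = y :=
    ae_of_ae_map (p := (· = y)) measurable_snd.aemeasurable (by simp [h.2])
  calc transportCost d p π = ∫⁻ _, ENNReal.ofReal (d x y) ^ p ∂π :=
        lintegral_congr_ae <| by filter_upwards [hfst, hsnd] with z h₁ h₂; rw [h₁, h₂]
    _ = ENNReal.ofReal (d x y) ^ p := by
        rw [lintegral_const, h.measure_univ_left, measure_univ, mul_one]

end Coupling

section Gluing

variable {Y Z : Type*} [MeasurableSpace X] [MeasurableSpace Y] [MeasurableSpace Z]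

lemma exists_measure_map_eq_of_map_snd_eq_map_fst [StandardBorelSpace Z] [Nonempty Z]
    (ρ : Measure (X × Y)) (τ : Measure (Y × Z)) [IsFiniteMeasure ρ] [IsFiniteMeasure τ]
    (h : ρ.map Prod.snd = τ.map Prod.fst) :
    ∃ γ : Measure ((X × Y) × Z), γ.map Prod.fst = ρ ∧ γ.map (fun w ↦ (w.1.2, w.2)) = τ := by
  refine ⟨ρ ⊗ₘ Kernel.prodMkLeft X τ.condKernel, Measure.fst_compProd _ _,
    Measure.ext_of_lintegral _ fun f hf ↦ ?_⟩
  have hint : Measurable fun y ↦ ∫⁻ z, f (y, z) ∂τ.condKernel y := hf.lintegral_kernel_prod_right'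
  calc ∫⁻ w, f w ∂(ρ ⊗ₘ Kernel.prodMkLeft X τ.condKernel).map (fun w ↦ (w.1.2, w.2))
      = ∫⁻ a, ∫⁻ z, f (a.2, z) ∂τ.condKernel a.2 ∂ρ := by
        rw [lintegral_map hf (by fun_prop), Measure.lintegral_compProd (by fun_prop)]
        simp only [Kernel.prodMkLeft_apply]
    _ = ∫⁻ y, ∫⁻ z, f (y, z) ∂τ.condKernel y ∂τ.fst := by
        rw [Measure.fst, ← h, lintegral_map hint measurable_snd]
    _ = ∫⁻ w, f w ∂τ := by
        rw [← Measure.lintegral_compProd hf, τ.disintegrate τ.condKernel]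

end Gluing

section Wasserstein

variable [MeasurableSpace X] {d : X → X → ℝ} {p : ℝ} {π : Measure (X × X)}
  {μ ν κ : Measure X}

lemma wassDist_rpow (hp : p ≠ 0) : wassDist d p μ ν ^ p =
    ⨅ π : {π : Measure (X × X) // IsCoupling π μ ν}, transportCost d p π.1 := by
  rw [wassDist, one_div, ENNReal.rpow_inv_rpow hp]

lemma wassDist_eq_iInf_rpow (hp : 0 < p) : wassDist d p μ ν =
    ⨅ π : {π : Measure (X × X) // IsCoupling π μ ν}, transportCost d p π.1 ^ (1 / p) :=
  (ENNReal.orderIsoRpow (1 / p) (one_div_pos.2 hp)).map_iInf _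

lemma IsCoupling.wassDist_le (h : IsCoupling π μ ν) (hp : 0 < p) :
    wassDist d p μ ν ≤ transportCost d p π ^ (1 / p) :=
  (wassDist_eq_iInf_rpow hp).trans_le (iInf_le_of_le ⟨π, h⟩ le_rfl)

lemma IsCoupling.wassDist_le_of_transportCost_le (h : IsCoupling π μ ν) (hp : 0 < p) {C : ℝ≥0∞}
    (hC : transportCost d p π ≤ C ^ p) : wassDist d p μ ν ≤ C := by
  refine (h.wassDist_le hp).trans ?_
  rwa [one_div, ENNReal.rpow_inv_le_iff hp]

lemma wassDist_self (hp : 0 < p) (hd : ∀ x, d x x = 0) (μ : Measure X) : wassDist d p μ μ = 0 :=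
  le_antisymm ((isCoupling_map_diag μ).wassDist_le_of_transportCost_le hp <|
    (transportCost_map_diag hp hd).trans_le zero_le) zero_le

lemma wassDist_swap (hp : 0 < p) (d : X → X → ℝ) (μ ν : Measure X) :
    wassDist (fun x y ↦ d y x) p μ ν = wassDist d p ν μ := by
  have hle (d : X → X → ℝ) (μ ν : Measure X) :
      wassDist (fun x y ↦ d y x) p μ ν ≤ wassDist d p ν μ := by
    rw [wassDist_eq_iInf_rpow (d := d) hp]
    refine le_iInf fun π ↦ ?_
    rw [← transportCost_map_swap]
    exact π.2.map_swap.wassDist_le hp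
  exact (hle d μ ν).antisymm (hle (fun x y ↦ d y x) ν μ)

lemma wassDist_le_mul {d' : X → X → ℝ} (hp : 0 < p) {C : ℝ} (hC : 0 < C)
    (h : ∀ x y, d x y ≤ C * d' x y) (μ ν : Measure X) :
    wassDist d p μ ν ≤ ENNReal.ofReal C * wassDist d' p μ ν := by
  rw [← ENNReal.rpow_le_rpow_iff hp, ENNReal.mul_rpow_of_nonneg _ _ hp.le, wassDist_rpow hp.ne',
    wassDist_rpow hp.ne', ENNReal.mul_iInf_of_ne (by simp [hC]) (by finiteness)]
  exact iInf_mono fun π ↦ transportCost_le_mul hp.le hC.le h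

lemma wassDist_mono {d' : X → X → ℝ} (hp : 0 < p) (h : ∀ x y, d x y ≤ d' x y) (μ ν : Measure X) :
    wassDist d p μ ν ≤ wassDist d' p μ ν := by
  simpa only [ENNReal.ofReal_one, one_mul] using
    wassDist_le_mul hp one_pos (by simpa only [one_mul] using h) μ ν

lemma wassDist_triangle [StandardBorelSpace X] [Nonempty X] (hp : 1 ≤ p)
    (hmeas : Measurable (Function.uncurry d)) (hnonneg : ∀ x y, 0 ≤ d x y)
    (htri : ∀ x y z, d x z ≤ d x y + d y z) (μ σ ν : Measure X) [IsFiniteMeasure σ] :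
    wassDist d p μ ν ≤ wassDist d p μ σ + wassDist d p σ ν := by
  have hp0 : 0 < p := one_pos.trans_le hp
  rw [wassDist_eq_iInf_rpow (μ := μ) (ν := σ) hp0, wassDist_eq_iInf_rpow (μ := σ) hp0]
  refine ENNReal.le_iInf_add_iInf fun ⟨ρ, hρ⟩ ⟨τ, hτ⟩ ↦ ?_
  have : IsFiniteMeasure ρ := ⟨hρ.measure_univ_right ▸ measure_lt_top σ univ⟩
  have : IsFiniteMeasure τ := ⟨hτ.measure_univ_left ▸ measure_lt_top σ univ⟩
  obtain ⟨γ, rfl, rfl⟩ :=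
    exists_measure_map_eq_of_map_snd_eq_map_fst ρ τ (hρ.2.trans hτ.1.symm)
  have hcost : Measurable fun z : X × X ↦ ENNReal.ofReal (d z.1 z.2) := hmeas.ennreal_ofReal
  have hcostp := hcost.pow_const p
  have hγ : IsCoupling (γ.map fun w ↦ (w.1.1, w.2)) μ ν := by
    rw [← hρ.1, ← hτ.2]
    constructor <;> rw [Measure.map_map (by fun_prop) (by fun_prop),
      Measure.map_map (by fun_prop) (by fun_prop)] <;> rfl
  simp only [transportCost]
  rw [lintegral_map hcostp (by fun_prop), lintegral_map hcostp (by fun_prop)]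
  calc wassDist d p μ ν
      ≤ (∫⁻ w, ENNReal.ofReal (d w.1.1 w.2) ^ p ∂γ) ^ (1 / p) := by
        simpa only [transportCost, lintegral_map hcostp
          (show Measurable fun w : (X × X) × X ↦ (w.1.1, w.2) by fun_prop)]
          using hγ.wassDist_le (d := d) hp0
    _ ≤ (∫⁻ w, (ENNReal.ofReal (d w.1.1 w.1.2) + ENNReal.ofReal (d w.1.2 w.2)) ^ p ∂γ) ^
          (1 / p) := by
        gcongr with w
        rw [← ENNReal.ofReal_add (hnonneg _ _) (hnonneg _ _)]
        exact ENNReal.ofReal_le_ofReal (htri _ _ _)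
    _ ≤ _ := ENNReal.lintegral_Lp_add_le (hcost.comp measurable_fst).aemeasurable
        (hcost.comp (by fun_prop : Measurable fun w : (X × X) × X ↦ (w.1.2, w.2))).aemeasurable hp

lemma wassDist_le_of_forall_le (hp : 0 < p) {D : ℝ≥0∞} (hD : ∀ x y, ENNReal.ofReal (d x y) ≤ D)
    [IsProbabilityMeasure μ] [IsProbabilityMeasure ν] : wassDist d p μ ν ≤ D := by
  have hπ : IsCoupling ((μ univ)⁻¹ • μ.prod ν) μ ν := isCoupling_inv_smul_prod (by simp)
  refine hπ.wassDist_le_of_transportCost_le hp ((transportCost_le_of_forall_le hp.le hD).trans ?_)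
  rw [hπ.measure_univ_left, measure_univ, mul_one]

-- The common part `κ` of `μ` and `ν` stays where it is; only the remaining mass is moved.
lemma wassDist_le_of_common_le (hp : 0 < p) (hd : ∀ x, d x x = 0) {D : ℝ≥0∞}
    (hD : ∀ x y, ENNReal.ofReal (d x y) ≤ D) [IsFiniteMeasure μ] [IsFiniteMeasure ν]
    (hμν : μ univ = ν univ) (hμ : κ ≤ μ) (hν : κ ≤ ν) :
    wassDist d p μ ν ≤ D * (μ univ - κ univ) ^ (1 / p) := by
  have : IsFiniteMeasure κ := isFiniteMeasure_of_le μ hμ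
  have hrest : (μ - κ) univ = (ν - κ) univ := by
    rw [Measure.sub_apply .univ hμ, Measure.sub_apply .univ hν, hμν]
  obtain ⟨π, hmove⟩ : ∃ π, IsCoupling π (μ - κ) (ν - κ) := ⟨_, isCoupling_inv_smul_prod hrest⟩
  have hπ := hmove.add (isCoupling_map_diag κ)
  rw [Measure.sub_add_cancel_of_le hμ, Measure.sub_add_cancel_of_le hν] at hπ
  refine hπ.wassDist_le_of_transportCost_le hp ?_
  rw [transportCost, lintegral_add_measure, ENNReal.mul_rpow_of_nonneg _ _ hp.le, one_div,
    ENNReal.rpow_inv_rpow hp.ne', ← Measure.sub_apply .univ hμ, ← hmove.measure_univ_left]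
  calc _ ≤ _ := add_le_add (transportCost_le_of_forall_le hp.le hD)
        (transportCost_map_diag hp hd).le
    _ = _ := add_zero _

lemma wassDist_dirac [MeasurableSingletonClass X] (hp : p ≠ 0) (x y : X) :
    wassDist d p (Measure.dirac x) (Measure.dirac y) = ENNReal.ofReal (d x y) := by
  have : Nonempty {π : Measure (X × X) // IsCoupling π (Measure.dirac x) (Measure.dirac y)} :=
    ⟨⟨_, isCoupling_inv_smul_prod (by simp)⟩⟩
  have hcost (π : {π : Measure (X × X) // IsCoupling π (Measure.dirac x) (Measure.dirac y)}) :
      transportCost d p π.1 = ENNReal.ofReal (d x y) ^ p := π.2.transportCost_dirac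
  simp only [wassDist, hcost, iInf_const, one_div, ENNReal.rpow_rpow_inv hp]

lemma iSup_wassDist_eq_iSup_ofReal [MeasurableSingletonClass X] (hp : 0 < p) :
    ⨆ (μ : ProbabilityMeasure X) (ν : ProbabilityMeasure X),
        wassDist d p (μ : Measure X) (ν : Measure X) =
      ⨆ (x : X) (y : X), ENNReal.ofReal (d x y) := by
  apply le_antisymm
  · exact iSup₂_le fun μ ν ↦ wassDist_le_of_forall_le hp fun x y ↦
      le_iSup₂ (f := fun x y ↦ ENNReal.ofReal (d x y)) x y
  · refine iSup₂_le fun x y ↦ ?_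
    rw [← wassDist_dirac hp.ne']
    exact le_iSup₂ (f := fun μ ν : ProbabilityMeasure X ↦ wassDist d p (μ : Measure X) ν)
      ⟨Measure.dirac x, inferInstance⟩ ⟨Measure.dirac y, inferInstance⟩

end Wasserstein

section Discretization

variable [MeasurableSpace X] {ι : Type*} [Fintype ι] {d : X → X → ℝ} {p : ℝ}
  {f : ι → X → ℝ≥0∞} {c : ι → X} {μ : Measure X}

/-- The discretization of `μ` along a finite partition of unity `f` with centres `c`: the mass
that `f i` picks from `μ` is moved to the point `c i`. -/
noncomputable def discretize (f : ι → X → ℝ≥0∞) (c : ι → X) (μ : Measure X) : Measure X :=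
  ∑ i, (∫⁻ x, f i x ∂μ) • Measure.dirac (c i)

lemma discretize_apply_univ (hf : ∀ i, Measurable (f i)) (hsum : ∀ x, ∑ i, f i x = 1) :
    discretize f c μ univ = μ univ := by
  simp only [discretize, Measure.finsetSum_apply, Measure.smul_apply, measure_univ, smul_eq_mul,
    mul_one, ← lintegral_finsetSum _ fun i _ ↦ hf i, hsum, lintegral_one]

lemma isCoupling_discretize (hf : ∀ i, Measurable (f i)) (hsum : ∀ x, ∑ i, f i x = 1) :
    IsCoupling (∑ i, (μ.withDensity (f i)).map fun x ↦ (x, c i)) μ (discretize f c μ) := by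
  have hμ : ∑ i, μ.withDensity (f i) = μ := by
    ext s hs
    simp only [Measure.finsetSum_apply, withDensity_apply _ hs,
      ← lintegral_finsetSum _ fun i _ ↦ hf i, hsum, lintegral_one, Measure.restrict_apply_univ]
  constructor
  · rw [Measure.map_finset_sum measurable_fst.aemeasurable]
    conv_rhs => rw [← hμ]
    refine Finset.sum_congr rfl fun i _ ↦ ?_
    rw [Measure.map_map measurable_fst (by fun_prop)]
    exact Measure.map_id
  · rw [Measure.map_finset_sum measurable_snd.aemeasurable]
    refine Finset.sum_congr rfl fun i _ ↦ ?_
    rw [Measure.map_map measurable_snd (by fun_prop), ← setLIntegral_univ,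
      ← withDensity_apply _ .univ]
    exact Measure.map_const _ _

lemma wassDist_discretize_le (hp : 0 < p) (hf : ∀ i, Measurable (f i))
    (hsum : ∀ x, ∑ i, f i x = 1) {C : ℝ≥0∞}
    (hC : ∀ i x, f i x ≠ 0 → ENNReal.ofReal (d x (c i)) ≤ C) [IsProbabilityMeasure μ] :
    wassDist d p μ (discretize f c μ) ≤ C := by
  refine (isCoupling_discretize hf hsum).wassDist_le_of_transportCost_le hp ?_
  rw [transportCost, lintegral_finsetSum_measure]
  have hcost (i : ι) : ∫⁻ z, ENNReal.ofReal (d z.1 z.2) ^ p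
      ∂(μ.withDensity (f i)).map (fun x ↦ (x, c i)) ≤ C ^ p * ∫⁻ x, f i x ∂μ := calc
    _ ≤ ∫⁻ x, ENNReal.ofReal (d x (c i)) ^ p ∂μ.withDensity (f i) := lintegral_map_le _ _
    _ ≤ ∫⁻ _, C ^ p ∂μ.withDensity (f i) := by
        refine lintegral_mono_ae ((ae_withDensity_iff (hf i)).2 (.of_forall fun x hx ↦ ?_))
        exact ENNReal.rpow_le_rpow (hC i x hx) hp.le
    _ = C ^ p * ∫⁻ x, f i x ∂μ := by
        rw [lintegral_const, withDensity_apply _ .univ, setLIntegral_univ]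
  calc _ ≤ ∑ i, C ^ p * ∫⁻ x, f i x ∂μ := Finset.sum_le_sum fun i _ ↦ hcost i
    _ = C ^ p := by
        simp only [← Finset.mul_sum, ← lintegral_finsetSum _ fun i _ ↦ hf i, hsum, lintegral_one,
          measure_univ, mul_one]

lemma wassDist_discretize_discretize_le (hp : 0 < p) (hd : ∀ x, d x x = 0) {D : ℝ≥0∞}
    (hD : ∀ x y, ENNReal.ofReal (d x y) ≤ D) (hf : ∀ i, Measurable (f i))
    (hsum : ∀ x, ∑ i, f i x = 1) (c : ι → X) (μ ν : Measure X) [IsProbabilityMeasure μ]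
    [IsProbabilityMeasure ν] : wassDist d p (discretize f c μ) (discretize f c ν) ≤
      D * (1 - ∑ i, min (∫⁻ x, f i x ∂μ) (∫⁻ x, f i x ∂ν)) ^ (1 / p) := by
  have huniv (σ : Measure X) [IsProbabilityMeasure σ] : discretize f c σ univ = 1 := by
    rw [discretize_apply_univ hf hsum, measure_univ]
  have hfin (σ : Measure X) [IsProbabilityMeasure σ] : IsFiniteMeasure (discretize f c σ) :=
    ⟨by rw [huniv σ]; exact ENNReal.one_lt_top⟩
  have := hfin μ
  have := hfin ν
  set κ : Measure X :=
    ∑ i, min (∫⁻ x, f i x ∂μ) (∫⁻ x, f i x ∂ν) • Measure.dirac (c i) with hκ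
  have hκuniv : κ univ = ∑ i, min (∫⁻ x, f i x ∂μ) (∫⁻ x, f i x ∂ν) := by simp [hκ]
  have hκμ : κ ≤ discretize f c μ := Finset.sum_le_sum fun i _ ↦
    Measure.le_iff.2 fun s _ ↦ by simp only [Measure.smul_apply]; gcongr; exact min_le_left _ _
  have hκν : κ ≤ discretize f c ν := Finset.sum_le_sum fun i _ ↦
    Measure.le_iff.2 fun s _ ↦ by simp only [Measure.smul_apply]; gcongr; exact min_le_right _ _
  simpa only [huniv μ, hκuniv] using
    wassDist_le_of_common_le hp hd hD ((huniv μ).trans (huniv ν).symm) hκμ hκν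

lemma tendsto_wassDist_discretize [TopologicalSpace X] [OpensMeasurableSpace X] {Ω : Type*}
    {l : Filter Ω} {u : Ω → ProbabilityMeasure X} {μ : ProbabilityMeasure X}
    (hu : Tendsto u l (𝓝 μ)) (hp : 0 < p) (hd : ∀ x, d x x = 0) {D : ℝ≥0∞} (hDtop : D ≠ ∞)
    (hD : ∀ x y, ENNReal.ofReal (d x y) ≤ D) {f : ι → X →ᵇ ℝ≥0} (hsum : ∀ x, ∑ i, f i x = 1)
    (c : ι → X) :
    Tendsto (fun k ↦ wassDist d p (discretize (fun i x ↦ f i x) c μ)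
      (discretize (fun i x ↦ f i x) c (u k))) l (𝓝 0) := by
  have hf (i : ι) : Measurable fun x ↦ (f i x : ℝ≥0∞) :=
    (f i).continuous.measurable.coe_nnreal_ennreal
  have hsum' (x : X) : ∑ i, (f i x : ℝ≥0∞) = 1 := by exact_mod_cast hsum x
  let w (ν : ProbabilityMeasure X) (i : ι) : ℝ≥0∞ := ∫⁻ x, f i x ∂ν
  have hw (i : ι) : Tendsto (fun k ↦ w (u k) i) l (𝓝 (w μ i)) :=
    ProbabilityMeasure.tendsto_iff_forall_lintegral_tendsto.1 hu (f i)
  have hwsum : ∑ i, w μ i = 1 := by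
    simp only [w, ← lintegral_finsetSum _ fun i _ ↦ hf i, hsum', lintegral_one, measure_univ]
  have hlim : Tendsto (fun k ↦ D * (1 - ∑ i, min (w μ i) (w (u k) i)) ^ (1 / p)) l
      (𝓝 (D * (1 - ∑ i, min (w μ i) (w μ i)) ^ (1 / p))) := by
    refine ENNReal.Tendsto.const_mul ((ENNReal.continuous_rpow_const.tendsto _).comp ?_)
      (.inr hDtop)
    exact ENNReal.Tendsto.sub tendsto_const_nhds
      (tendsto_finsetSum _ fun i _ ↦ tendsto_const_nhds.min (hw i)) (.inl ENNReal.one_ne_top)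
  simp only [min_self, hwsum, tsub_self, ENNReal.zero_rpow_of_pos (one_div_pos.2 hp),
    mul_zero] at hlim
  exact tendsto_of_tendsto_of_tendsto_of_le_of_le tendsto_const_nhds hlim (fun _ ↦ zero_le)
    fun k ↦ wassDist_discretize_discretize_le hp hd hD hf hsum' c μ (u k)

end Discretization

section Metric

lemma exists_boundedContinuous_sum_eq_one_edist_lt (Y : Type*) [PseudoEMetricSpace Y]
    [CompactSpace Y] {δ : ℝ≥0∞} (hδ : 0 < δ) :
    ∃ (t : Finset Y) (f : t → Y →ᵇ ℝ≥0), (∀ x, ∑ i, f i x = 1) ∧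
      ∀ i x, f i x ≠ 0 → edist x i < δ := by
  obtain ⟨t, ht⟩ := isCompact_univ.elim_nhds_subcover (fun x : Y ↦ Metric.eball x δ)
    fun x _ ↦ Metric.eball_mem_nhds x hδ
  have hcover : (univ : Set Y) ⊆ ⋃ i : t, Metric.eball (i : Y) δ := fun x hx ↦ by
    simpa using ht.2 hx
  obtain ⟨g, hg⟩ := PartitionOfUnity.exists_isSubordinate isClosed_univ _
    (fun i : t ↦ Metric.isOpen_eball) hcover
  refine ⟨t, fun i ↦ .mkOfCompact ⟨fun x ↦ (g i x).toNNReal, by fun_prop⟩, fun x ↦ ?_,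
    fun i x hx ↦ ?_⟩
  · have hgx := g.sum_eq_one (mem_univ x)
    rw [finsum_eq_sum_of_fintype] at hgx
    simp only [BoundedContinuousFunction.mkOfCompact_apply, ContinuousMap.coe_mk]
    rw [← Real.toNNReal_sum_of_nonneg fun i _ ↦ g.nonneg i x, hgx, Real.toNNReal_one]
  · have hgx : g i x ≠ 0 := fun h ↦ hx (by simp [h])
    exact hg i (subset_tsupport _ hgx)

variable {Y : Type*} [MeasurableSpace Y] {p : ℝ}

lemma wassDist_dist_comm [PseudoMetricSpace Y] (hp : 0 < p) (μ ν : Measure Y) :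
    wassDist dist p μ ν = wassDist dist p ν μ := by
  simpa only [dist_comm] using wassDist_swap hp (dist : Y → Y → ℝ) μ ν

lemma IsCoupling.levyProkhorovEDist_rpow_le [PseudoMetricSpace Y] [OpensMeasurableSpace Y]
    [SecondCountableTopology Y] {π : Measure (Y × Y)} {μ ν : Measure Y} [IsProbabilityMeasure μ]
    [IsProbabilityMeasure ν] (h : IsCoupling π μ ν) (hp : 0 < p) :
    levyProkhorovEDist μ ν ^ (p + 1) ≤ transportCost dist p π := by
  have hp1 : 0 < p + 1 := by positivity
  rw [← ENNReal.le_rpow_inv_iff hp1]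
  refine levyProkhorovEDist_le_of_forall_le _ _ _ fun ε B hε hεtop hB ↦ ?_
  rw [ENNReal.rpow_inv_lt_iff hp1] at hε
  have hε0 : ε ≠ 0 := by rintro rfl; simp [hp1] at hε
  have hcost : Measurable fun z : Y × Y ↦ ENNReal.ofReal (dist z.1 z.2) ^ p :=
    measurable_dist.ennreal_ofReal.pow_const p
  have hfar : π {z | ε ≤ ENNReal.ofReal (dist z.1 z.2)} ≤ ε := by
    have hmarkov := (mul_meas_ge_le_lintegral hcost (ε ^ p)).trans hε.le
    simp only [ENNReal.rpow_le_rpow_iff hp] at hmarkov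
    rw [ENNReal.rpow_add _ _ hε0 hεtop.ne, ENNReal.rpow_one] at hmarkov
    exact (ENNReal.mul_le_mul_iff_right (by simp [hε0, hp.le]) (by finiteness)).1 hmarkov
  have hsub : Prod.fst ⁻¹' B ⊆ Prod.snd ⁻¹' Metric.thickening ε.toReal B ∪
      {z : Y × Y | ε ≤ ENNReal.ofReal (dist z.1 z.2)} := by
    intro z hz
    refine or_iff_not_imp_right.2 fun hlt ↦ Metric.mem_thickening_iff.2 ⟨z.1, hz, ?_⟩
    rw [mem_ofPred_eq, not_le, ENNReal.ofReal_lt_iff_lt_toReal dist_nonneg hεtop.ne] at hlt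
    rwa [dist_comm]
  calc μ B = π (Prod.fst ⁻¹' B) := by rw [← h.1, Measure.map_apply measurable_fst hB]
    _ ≤ π (Prod.snd ⁻¹' Metric.thickening ε.toReal B) +
          π {z | ε ≤ ENNReal.ofReal (dist z.1 z.2)} :=
        (measure_mono hsub).trans (measure_union_le _ _)
    _ ≤ ν (Metric.thickening ε.toReal B) + ε := by
        rw [← h.2, Measure.map_apply measurable_snd Metric.isOpen_thickening.measurableSet]
        gcongr

lemma levyProkhorovEDist_rpow_le_wassDist_rpow [PseudoMetricSpace Y] [OpensMeasurableSpace Y]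
    [SecondCountableTopology Y] (μ ν : Measure Y) [IsProbabilityMeasure μ]
    [IsProbabilityMeasure ν] (hp : 0 < p) :
    levyProkhorovEDist μ ν ^ (p + 1) ≤ wassDist dist p μ ν ^ p := by
  rw [wassDist_rpow hp.ne']
  exact le_iInf fun π ↦ π.2.levyProkhorovEDist_rpow_le hp

lemma eq_of_wassDist_dist_eq_zero [PseudoMetricSpace Y] [BorelSpace Y] [SecondCountableTopology Y]
    (hp : 0 < p) {μ ν : Measure Y} [IsProbabilityMeasure μ] [IsProbabilityMeasure ν]
    (h : wassDist dist p μ ν = 0) : μ = ν := by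
  have hLP : levyProkhorovEDist μ ν = 0 := by
    have hle := levyProkhorovEDist_rpow_le_wassDist_rpow μ ν hp
    rw [h, ENNReal.zero_rpow_of_pos hp, nonpos_iff_eq_zero] at hle
    exact (ENNReal.rpow_eq_zero_iff_of_pos (by positivity)).1 hle
  let μ' : ProbabilityMeasure Y := ⟨μ, inferInstance⟩
  let ν' : ProbabilityMeasure Y := ⟨ν, inferInstance⟩
  have heq : LevyProkhorov.ofMeasure μ' = LevyProkhorov.ofMeasure ν' := edist_eq_zero.1 hLP
  exact congrArg (fun ρ ↦ (ρ.toMeasure : Measure Y)) heq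

lemma tendsto_wassDist_dist [MetricSpace Y] [CompactSpace Y] [BorelSpace Y] (hp : 1 ≤ p)
    {Ω : Type*} {l : Filter Ω} {u : Ω → ProbabilityMeasure Y} {μ : ProbabilityMeasure Y}
    (hu : Tendsto u l (𝓝 μ)) :
    Tendsto (fun k ↦ wassDist dist p (μ : Measure Y) (u k)) l (𝓝 0) := by
  have hp0 : 0 < p := one_pos.trans_le hp
  have : Nonempty Y := nonempty_of_isProbabilityMeasure (μ : Measure Y)
  refine ENNReal.tendsto_nhds_zero.2 fun ε hε ↦ ?_
  have hε3 : 0 < ε / 3 := ENNReal.div_pos hε.ne' (by finiteness)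
  obtain ⟨t, f, hsum, hsupp⟩ := exists_boundedContinuous_sum_eq_one_edist_lt Y hε3
  have hf (i : t) : Measurable fun x ↦ (f i x : ℝ≥0∞) :=
    (f i).continuous.measurable.coe_nnreal_ennreal
  have hsum' (x : Y) : ∑ i, (f i x : ℝ≥0∞) = 1 := by exact_mod_cast hsum x
  let q (ν : Measure Y) : Measure Y := discretize (fun i x ↦ f i x) (↑) ν
  have hq (ν : ProbabilityMeasure Y) : wassDist dist p (ν : Measure Y) (q ν) ≤ ε / 3 := by
    refine wassDist_discretize_le hp0 hf hsum' fun i x hx ↦ ?_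
    rw [← edist_dist]
    exact (hsupp i x (by exact_mod_cast hx)).le
  have hqfin (ν : ProbabilityMeasure Y) : IsFiniteMeasure (q ν) :=
    ⟨by simp [q, discretize_apply_univ hf hsum']⟩
  have hqlim : ∀ᶠ k in l, wassDist dist p (q μ) (q (u k)) ≤ ε / 3 := by
    refine ENNReal.tendsto_nhds_zero.1 (tendsto_wassDist_discretize hu hp0 dist_self
      (D := Metric.ediam (univ : Set Y)) isCompact_univ.isBounded.ediam_ne_top
      (fun x y ↦ ?_) hsum _) _ hε3
    rw [← edist_dist]
    exact Metric.edist_le_ediam_of_mem (mem_univ x) (mem_univ y)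
  have htri (μ σ ν : Measure Y) [IsFiniteMeasure σ] :=
    wassDist_triangle hp measurable_dist (fun _ _ ↦ dist_nonneg) dist_triangle μ σ ν
  filter_upwards [hqlim] with k hk
  calc wassDist dist p (μ : Measure Y) (u k)
      ≤ wassDist dist p (μ : Measure Y) (q μ) + wassDist dist p (q μ) (q (u k)) +
          wassDist dist p (q (u k)) (u k : Measure Y) :=
        (htri _ (q (u k)) _).trans (by gcongr; exact htri _ _ _)
    _ ≤ ε / 3 + ε / 3 + ε / 3 := by
        gcongr
        · exact hq μ
        · rw [wassDist_dist_comm hp0]; exact hq (u k)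
    _ = ε := ENNReal.add_thirds ε

end Metric

section Symmetrization

variable {d : X → X → ℝ}

/-- The symmetrization `max (d x y) (d y x)` of an irreversible metric `d`, a genuine metric. -/
@[reducible] noncomputable def IsIrrevMetric.toMetricSpace (hd : IsIrrevMetric d) :
    MetricSpace X where
  dist x y := max (d x y) (d y x)
  dist_self x := by simp [(hd.2.1 x x).2 rfl]
  dist_comm x y := max_comm _ _
  dist_triangle x y z := by
    refine max_le ((hd.2.2 x y z).trans ?_) ((hd.2.2 z y x).trans ?_)
    · exact add_le_add (le_max_left _ _) (le_max_left _ _)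
    · rw [add_comm]
      exact add_le_add (le_max_right _ _) (le_max_right _ _)
  eq_of_dist_eq_zero {x y} h :=
    (hd.2.1 x y).1 (((le_max_left _ _).trans h.le).antisymm (hd.1 x y))

lemma IsIrrevMetric.toMetricSpace_topology_eq_fwdTop (hd : IsIrrevMetric d) {θ : ℝ} (hθ : 1 ≤ θ)
    (hrev : ∀ x y, d x y ≤ θ * d y x) :
    hd.toMetricSpace.toUniformSpace.toTopologicalSpace = fwdTop d := by
  let := hd.toMetricSpace
  have hdist (x y : X) : dist x y = max (d x y) (d y x) := rfl
  refine le_antisymm (le_generateFrom ?_) fun s hs ↦ ?_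
  · rintro _ ⟨x, r, rfl⟩
    refine Metric.isOpen_iff.2 fun y hy ↦ ⟨r - d x y, sub_pos.2 hy, fun z hz ↦ ?_⟩
    rw [Metric.mem_ball, hdist, max_lt_iff] at hz
    exact (hd.2.2 x y z).trans_lt (by linarith)
  · refine (@isOpen_iff_mem_nhds _ (fwdTop d) _).2 fun x hx ↦ ?_
    obtain ⟨r, hr, hrs⟩ := Metric.isOpen_iff.1 hs x hx
    have hθ0 : 0 < θ := one_pos.trans_le hθ
    have hball : fwdBall d x (r / θ) ⊆ Metric.ball x r := by
      intro y (hy : d x y < r / θ)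
      rw [lt_div_iff₀ hθ0] at hy
      rw [Metric.mem_ball, hdist]
      exact max_lt (by linarith [hrev y x])
        ((le_mul_of_one_le_right (hd.1 x y) hθ).trans_lt hy)
    have hx : x ∈ fwdBall d x (r / θ) := by
      rw [fwdBall, mem_ofPred_eq, (hd.2.1 x x).2 rfl]
      positivity
    exact mem_of_superset (@IsOpen.mem_nhds _ (fwdTop d) _ _
      (TopologicalSpace.isOpen_generateFrom_of_mem ⟨x, _, rfl⟩) hx) (hball.trans hrs)

lemma continuous_uncurry_of_le_dist [PseudoMetricSpace X] (hle : ∀ x y, d x y ≤ dist x y)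
    (htri : ∀ x y z, d x z ≤ d x y + d y z) : Continuous (Function.uncurry d) := by
  refine (LipschitzWith.uncurry (Kα := 1) (Kβ := 1) (fun z ↦ ?_) fun x ↦ ?_).continuous
  · exact .of_le_add fun x y ↦ by linarith [htri x y z, hle x y]
  · exact .of_le_add fun y z ↦ by linarith [htri x z y, hle z y, dist_comm y z]

end Symmetrization

/-- Let `(X,d)` be a compact θ-metric space. Then for every `p ∈ [1,∞)` the
Wasserstein space `(P(X), W_p)` is a compact θ-metric space (nonnegativity is automatic; `W_p`
vanishes exactly on the diagonal, satisfies the triangle inequality, has reversibility ≤ θ,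
and the space of probability measures is sequentially compact for `W_p`), with
`diam (P(X), W_p) = diam (X,d)`, and `x ↦ δ_x` is an isometric embedding. -/
theorem stmt15 [mX : MeasurableSpace X] (d : X → X → ℝ) (hd : IsIrrevMetric d)
    (θ : ℝ) (hθ : 1 ≤ θ) (hrev : ∀ x y, d x y ≤ θ * d y x)
    (hmX : mX = @borel X (fwdTop d))
    (hcpt : @CompactSpace X (fwdTop d))
    (p : ℝ) (hp : 1 ≤ p) :
    (∀ μ ν : Measure X, IsProbabilityMeasure μ → IsProbabilityMeasure ν →
      (wassDist d p μ ν = 0 ↔ μ = ν)) ∧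
    (∀ μ σ ν : Measure X, IsProbabilityMeasure μ → IsProbabilityMeasure σ →
      IsProbabilityMeasure ν →
      wassDist d p μ ν ≤ wassDist d p μ σ + wassDist d p σ ν) ∧
    (∀ μ ν : Measure X, IsProbabilityMeasure μ → IsProbabilityMeasure ν →
      wassDist d p μ ν ≤ ENNReal.ofReal θ * wassDist d p ν μ) ∧
    (∀ u : ℕ → Measure X, (∀ k, IsProbabilityMeasure (u k)) →
      ∃ (μ : Measure X) (φ : ℕ → ℕ), IsProbabilityMeasure μ ∧ StrictMono φ ∧
        Tendsto (fun k => wassDist d p μ (u (φ k))) atTop (nhds 0)) ∧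
    ((⨆ (μ : ProbabilityMeasure X) (ν : ProbabilityMeasure X),
        wassDist d p (μ : Measure X) (ν : Measure X)) =
      ⨆ (x : X) (y : X), ENNReal.ofReal (d x y)) ∧
    (∀ x y : X, wassDist d p (Measure.dirac x) (Measure.dirac y) = ENNReal.ofReal (d x y)) := by
  let := hd.toMetricSpace
  have htop : PseudoMetricSpace.toUniformSpace.toTopologicalSpace = fwdTop d :=
    hd.toMetricSpace_topology_eq_fwdTop hθ hrev
  have : CompactSpace X := htop ▸ hcpt
  have : BorelSpace X := ⟨by rw [hmX, htop]⟩
  have hp0 : 0 < p := one_pos.trans_le hp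
  have hθ0 : 0 < θ := one_pos.trans_le hθ
  have hd_le (x y : X) : d x y ≤ dist x y := le_max_left _ _
  have hle_d (x y : X) : dist x y ≤ θ * d x y :=
    max_le (le_mul_of_one_le_left (hd.1 x y) hθ) (hrev y x)
  refine ⟨fun μ ν _ _ ↦ ⟨fun h ↦ eq_of_wassDist_dist_eq_zero hp0 ?_, ?_⟩, fun μ σ ν _ _ _ ↦ ?_,
    fun μ ν _ _ ↦ ?_, fun u hu ↦ ?_, iSup_wassDist_eq_iSup_ofReal hp0, wassDist_dirac hp0.ne'⟩
  · simpa [h] using wassDist_le_mul hp0 hθ0 hle_d μ ν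
  · rintro rfl
    exact wassDist_self hp0 (fun x ↦ (hd.2.1 x x).2 rfl) μ
  · have := nonempty_of_isProbabilityMeasure σ
    have hmeas := (continuous_uncurry_of_le_dist hd_le hd.2.2).measurable
    exact wassDist_triangle hp hmeas hd.1 hd.2.2 μ σ ν
  · exact (wassDist_le_mul hp0 hθ0 hrev μ ν).trans_eq (by rw [wassDist_swap hp0 d])
  · let v (k : ℕ) : ProbabilityMeasure X := ⟨u k, hu k⟩
    obtain ⟨μ, φ, hφ, hlim⟩ := CompactSpace.tendsto_subseq v
    exact ⟨μ, φ, μ.2, hφ, tendsto_of_tendsto_of_tendsto_of_le_of_le tendsto_const_nhds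
      (tendsto_wassDist_dist hp hlim) (fun _ ↦ zero_le) fun k ↦ wassDist_mono hp0 hd_le μ (v (φ k))⟩
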